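/- arXiv:2312.08474 — 9 statements merged into one kernel-verified Lean document; each statement's English description precedes it below -/
import Mathlib

section
/- Let d, n, k be integers with d ≥ 2 and 2 ≤ k ≤ n, and set t = ⌊n/(k−1)⌋. Then the maximal value of Σ_{i=1}^n (d^{n_i} − 1) + 1 over all tuples (n_1, …, n_n) of non-negative integers satisfying Σ_i n_i = n and 0 ≤ n_i ≤ k−1 for all i equals t·d^{k−1} − t + d^{n − t(k−1)}. That is, every such tuple satisfies Σ_{i=1}^n (d^{n_i} − 1) + 1 ≤ t·d^{k−1} − t + d^{n − t(k−1)}, and this value is attained by the tuple with t entries equal to k−1, one entry equal to n − t(k−1), and the remaining entries equal to 0. -/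
/-!
Put `q = k - 1` and `φ m = d ^ m - 1`. The function `φ` is convex with `φ 0 = 0`, so for a prescribed
total the sum of the `φ (n_i)` over `0 ≤ n_i ≤ q` is largest at an extreme point, where all entries
but one are `0` or `q`.

Concretely, let `maxVal d q m = (m / q) * φ q + φ (m % q)` be the claimed optimum (without the
summand `1`) for total `m`. Convexity (`pow_sub_one_convex`) gives
`maxVal d q m + φ a ≤ maxVal d q (m + a)` for `a ≤ q` (`maxVal_add_le`): merging the new entry `a`
with the remainder `m % q`, and splitting off a full block `q` on overflow, never decreases the sum.
Induction on the number of entries then gives the upper bound.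
-/

/-- The discrete convexity of `m ↦ d ^ m - 1`; the difference of the two sides is
`d ^ s * (d ^ u - 1) * (d ^ v - 1)`. -/
lemma pow_sub_one_convex (d : ℕ) (hd : 1 ≤ d) (s u v : ℕ) :
    (d ^ (s + u) - 1) + (d ^ (s + v) - 1) ≤ (d ^ (s + u + v) - 1) + (d ^ s - 1) := by
  have h (m : ℕ) : 1 ≤ d ^ m := Nat.one_le_pow _ _ hd
  zify [h]
  have hs : (1 : ℤ) ≤ (d : ℤ) ^ s := mod_cast h s
  have hu : (1 : ℤ) ≤ (d : ℤ) ^ u := mod_cast h u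
  have hv : (1 : ℤ) ≤ (d : ℤ) ^ v := mod_cast h v
  have key : 0 ≤ (d : ℤ) ^ s * (((d : ℤ) ^ u - 1) * ((d : ℤ) ^ v - 1)) :=
    mul_nonneg (by linarith) (mul_nonneg (by linarith) (by linarith))
  simp only [pow_add]
  linarith

/-- The sum of `d ^ x - 1` over the entries `x` of the tuple that splits `m` greedily into `m / q`
blocks of size `q` and one block of size `m % q`. -/
def maxVal (d q m : ℕ) : ℕ := (m / q) * (d ^ q - 1) + (d ^ (m % q) - 1)

lemma maxVal_add_le (d q m a : ℕ) (hd : 1 ≤ d) (hq : 0 < q) (ha : a ≤ q) :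
    maxVal d q m + (d ^ a - 1) ≤ maxVal d q (m + a) := by
  have hr : m % q < q := Nat.mod_lt _ hq
  have hm : q * (m / q) + m % q = m := Nat.div_add_mod m q
  unfold maxVal
  generalize m / q = t at *
  generalize m % q = r at *
  subst hm
  rcases lt_or_ge (r + a) q with h | h
  · have h1 : (q * t + r + a) / q = t := by
      rw [add_assoc, Nat.mul_add_div hq, Nat.div_eq_of_lt h, add_zero]
    have h2 : (q * t + r + a) % q = r + a := by
      rw [add_assoc, Nat.mul_add_mod, Nat.mod_eq_of_lt h]
    have := pow_sub_one_convex d hd 0 r a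
    simp only [zero_add, pow_zero, Nat.sub_self, add_zero] at this
    rw [h1, h2]
    lia
  · obtain ⟨s, hs⟩ := Nat.exists_eq_add_of_le h
    have hsq : s < q := by lia
    have h0 : q * t + r + a = q * (t + 1) + s := by rw [mul_add]; lia
    have h1 : (q * t + r + a) / q = t + 1 := by
      rw [h0, Nat.mul_add_div hq, Nat.div_eq_of_lt hsq, add_zero]
    have h2 : (q * t + r + a) % q = s := by
      rw [h0, Nat.mul_add_mod, Nat.mod_eq_of_lt hsq]
    have := pow_sub_one_convex d hd s (r - s) (q - r)
    rw [show s + (r - s) = r by lia, show s + (q - r) = a by lia,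
      show r + (q - r) = q by lia] at this
    rw [h1, h2, add_mul]
    lia

lemma sum_le_maxVal (d q : ℕ) (hd : 1 ≤ d) (hq : 0 < q) (f : ℕ → ℕ) (N : ℕ)
    (hf : ∀ i, i < N → f i ≤ q) :
    ∑ i ∈ Finset.range N, (d ^ f i - 1) ≤ maxVal d q (∑ i ∈ Finset.range N, f i) := by
  induction N with
  | zero => simp
  | succ N ih =>
    rw [Finset.sum_range_succ, Finset.sum_range_succ]
    exact (Nat.add_le_add_right (ih fun i hi => hf i (by lia)) _).trans
      (maxVal_add_le d q _ _ hd hq (hf N (by lia)))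

/-- The hypothesis `h` covers the case in which `t` blocks already fill all `n` positions, so that
the position `t` of the remainder block lies outside the range. -/
lemma sum_greedy (φ : ℕ → ℕ) (hφ : φ 0 = 0) (n t q r : ℕ) (h : t < n ∨ t = n ∧ r = 0) :
    ∑ i ∈ Finset.range n, φ (if i < t then q else if i = t then r else 0) = t * φ q + φ r := by
  have hlt (s : ℕ) :
      ∑ i ∈ Finset.range s, φ (if i < s then q else if i = s then r else 0) = s * φ q := by
    rw [Finset.sum_congr rfl (g := fun _ => φ q)
      fun i hi => by rw [if_pos (Finset.mem_range.mp hi)]]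
    simp
  rcases h with h | ⟨rfl, rfl⟩
  · rw [← Finset.sum_subset (Finset.range_subset_range.mpr (show t + 1 ≤ n from h)),
      Finset.sum_range_succ, hlt]
    · simp
    · intro i _ hi
      rw [Finset.mem_range] at hi
      rw [if_neg (by lia), if_neg (by lia), hφ]
  · rw [hlt, hφ, add_zero]

/-- **Fact 3.** For integers `d ≥ 2`, `2 ≤ k ≤ n` and `t = ⌊n/(k-1)⌋`, the maximal value
of `∑_{i=1}^n (d^{n_i} - 1) + 1` over all tuples of non-negative integers `(n_1, …, n_n)`
with `∑ n_i = n` and `n_i ≤ k - 1` equals `t d^{k-1} - t + d^{n - t(k-1)}`: every such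
tuple obeys this upper bound, and it is attained by the tuple with `t` entries equal to
`k - 1`, one entry equal to `n - t(k-1)`, and the remaining entries `0`. -/
theorem stmt_1 (d n k : ℕ) (hd : 2 ≤ d) (hk : 2 ≤ k) (hkn : k ≤ n) :
    (∀ f : ℕ → ℕ, (∀ i, i < n → f i ≤ k - 1) →
        ∑ i ∈ Finset.range n, f i = n →
        ∑ i ∈ Finset.range n, (d ^ (f i) - 1) + 1 ≤
          (n / (k - 1)) * d ^ (k - 1) - (n / (k - 1)) + d ^ (n - (n / (k - 1)) * (k - 1))) ∧
    (∀ g : ℕ → ℕ,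
        (∀ i, g i = if i < n / (k - 1) then k - 1
                    else if i = n / (k - 1) then n - (n / (k - 1)) * (k - 1)
                    else 0) →
        (∀ i, i < n → g i ≤ k - 1) ∧
        ∑ i ∈ Finset.range n, g i = n ∧
        ∑ i ∈ Finset.range n, (d ^ (g i) - 1) + 1 =
          (n / (k - 1)) * d ^ (k - 1) - (n / (k - 1)) + d ^ (n - (n / (k - 1)) * (k - 1))) := by
  have hq : 0 < k - 1 := by lia
  have hrem : n - n / (k - 1) * (k - 1) = n % (k - 1) := by
    rw [mul_comm]; exact (Nat.mod_eq_sub_mul_div).symm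
  have hval : n / (k - 1) * d ^ (k - 1) - n / (k - 1) + d ^ (n - n / (k - 1) * (k - 1))
      = maxVal d (k - 1) n + 1 := by
    have h1 : 1 ≤ d ^ (n % (k - 1)) := Nat.one_le_pow _ _ (by lia)
    rw [hrem, maxVal, Nat.mul_sub, mul_one]
    lia
  rw [hval]
  refine ⟨fun f hf hsum => ?_, fun g hg => ?_⟩
  · have := sum_le_maxVal d (k - 1) (by lia) hq f n hf
    rw [hsum] at this
    lia
  · simp only [hrem] at hg
    have hmod : n % (k - 1) < k - 1 := Nat.mod_lt _ hq
    have hpos : n / (k - 1) < n ∨ n / (k - 1) = n ∧ n % (k - 1) = 0 := by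
      rcases Nat.lt_or_ge 1 (k - 1) with h | h
      · exact Or.inl (Nat.div_lt_self (by lia) h)
      · have h1 : k - 1 = 1 := by lia
        right
        rw [h1]
        simp [Nat.mod_one]
    refine ⟨fun i _ => ?_, ?_, ?_⟩
    · rw [hg]
      split_ifs <;> lia
    · simp only [hg]
      rw [sum_greedy (fun x => x) rfl n _ _ _ hpos, mul_comm]
      exact Nat.div_add_mod n (k - 1)
    · simp only [hg]
      rw [sum_greedy (fun x => d ^ x - 1) (by simp) n _ _ _ hpos, maxVal]
end

section
/- Let d, n, k be integers with d ≥ 2 and 2 ≤ k ≤ n, and define D(d,k,n) = d^n − (t·d^{k−1} + d^{n−(k−1)t} − t) where t = ⌊n/(k−1)⌋. Then D is strictly increasing in d for fixed k and n: D(d+1, k, n) > D(d, k, n). -/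
/-!
Put `m = k - 1`, `t = n / m`, `r = n - m t`, and write `x = d ^ m`, `y = d ^ r`, with `X`, `Y` the
corresponding powers of `d + 1`. Then `D = x ^ t * y - t * x - y + t`, and the increment from `d` to
`d + 1` is
`(Y - y) * (X ^ t - 1) + (y * (X ^ t - x ^ t) - t * (X - x))`.
The first term is nonnegative. By the tangent-line bound `pow_tangent_le`, the second is at least
`t * (X - x) * (y * x ^ (t - 1) - 1)`, which is positive because `y * x ^ (t - 1) = d ^ (n - m)`
and `m < n`.
-/

/-- The maximal dimension of a `k`-CES of `(ℂ^d)^{⊗n}`: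
`D(d,k,n) = d^n − (t·d^{k−1} + d^{n−(k−1)t} − t)` with `t = ⌊n/(k−1)⌋`. -/
def Dmax (d k n : ℕ) : ℤ :=
  (d : ℤ) ^ n -
    (((n / (k - 1) : ℕ) : ℤ) * (d : ℤ) ^ (k - 1)
      + (d : ℤ) ^ (n - (k - 1) * (n / (k - 1)))
      - ((n / (k - 1) : ℕ) : ℤ))

/-- To the right of `x ≥ 0`, the graph of `u ↦ u ^ (s + 1)` lies above its tangent line at `x`. -/
lemma pow_tangent_le (x X : ℤ) (hx : 0 ≤ x) (h : x ≤ X) (s : ℕ) :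
    ((s + 1 : ℕ) : ℤ) * x ^ s * (X - x) ≤ X ^ (s + 1) - x ^ (s + 1) := by
  induction s with
  | zero => simp
  | succ s ih =>
    have h0 : 0 ≤ X ^ (s + 1) - x ^ (s + 1) := sub_nonneg.2 (by gcongr)
    have h1 := mul_le_mul_of_nonneg_left ih hx
    have h2 := mul_le_mul_of_nonneg_right h h0
    push_cast at h1 ⊢
    linear_combination h1 + h2

/-- **Case (a):** for `d ≥ 2` and `2 ≤ k ≤ n`, the maximal `k`-CES dimension is strictly
increasing in `d` for fixed `k` and `n`: `D(d+1,k,n) > D(d,k,n)`. -/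
theorem stmt_2 (d k n : ℕ) (hd : 2 ≤ d) (hk : 2 ≤ k) (hkn : k ≤ n) :
    Dmax d k n < Dmax (d + 1) k n := by
  obtain ⟨m, rfl⟩ : ∃ m, k = m + 1 := ⟨k - 1, by omega⟩
  have hm : 1 ≤ m := by omega
  obtain ⟨s, hs⟩ : ∃ s, n / m = s + 1 :=
    ⟨n / m - 1, by have := Nat.div_pos (show m ≤ n by omega) hm; omega⟩
  have hle : m * (s + 1) ≤ n := hs ▸ Nat.mul_div_le n m
  unfold Dmax
  rw [Nat.add_sub_cancel, hs]
  obtain ⟨r, hr⟩ : ∃ r, n = m * (s + 1) + r := ⟨n - m * (s + 1), by omega⟩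
  have hr' : n - m * (s + 1) = r := by omega
  rw [hr', hr]
  have hd' : (2 : ℤ) ≤ d := by exact_mod_cast hd
  have hxX : (d : ℤ) ^ m < ((d + 1 : ℕ) : ℤ) ^ m :=
    pow_lt_pow_left₀ (by push_cast; linarith) (by positivity) (by omega)
  have hyY : (d : ℤ) ^ r ≤ ((d + 1 : ℕ) : ℤ) ^ r :=
    pow_le_pow_left₀ (by positivity) (by push_cast; linarith) r
  -- `m * s + r = n - m` is positive since `m < n`.
  have hyx : 1 < (d : ℤ) ^ r * ((d : ℤ) ^ m) ^ s := by
    rw [← pow_mul, ← pow_add]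
    exact one_lt_pow₀ (by linarith) (by rw [mul_add] at hr; omega)
  have hy : 0 ≤ (d : ℤ) ^ r := by positivity
  have hx : 0 ≤ (d : ℤ) ^ m := by positivity
  simp only [pow_add _ (m * (s + 1)) r, pow_mul]
  generalize (d : ℤ) ^ m = x at *
  generalize (d : ℤ) ^ r = y at *
  generalize ((d + 1 : ℕ) : ℤ) ^ m = X at *
  generalize ((d + 1 : ℕ) : ℤ) ^ r = Y at *
  have h1 := mul_le_mul_of_nonneg_left (pow_tangent_le x X hx hxX.le s) hy
  have h2 : 0 ≤ (Y - y) * (X ^ (s + 1) - 1) :=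
    mul_nonneg (by linarith) (sub_nonneg.2 (one_le_pow₀ (by linarith)))
  have h3 : 0 < ((s + 1 : ℕ) : ℤ) * (X - x) * (y * x ^ s - 1) :=
    mul_pos (mul_pos (by positivity) (by linarith)) (by linarith)
  linear_combination h1 + h2 + h3
end

section
/- Let d, n, k be integers with d ≥ 2 and 2 ≤ k ≤ n−1, and define D(d,k,n) = d^n − (t·d^{k−1} + d^{n−(k−1)t} − t) where t = ⌊n/(k−1)⌋. Then D is strictly decreasing in k for fixed d and n: D(d, k+1, n) < D(d, k, n). -/
/-- The comparison left after cancelling the common terms and replacing the factor `d - 1` of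
`s (d - 1) d ^ m` by `1`. For `q < s`
the bound `d ^ r < d ^ m` suffices; for `q = s` the relation `h` forces `r ≤ r'`; and `q > s` is
possible only for `m = 1`, `r = 0`, `r' = 1`, `q = s + 1`. -/
theorem key_ineq (d m s q r r' : ℕ) (hd : 2 ≤ d) (hm : 1 ≤ m) (hs : 1 ≤ s) (hr : r < m)
    (hr' : r' ≤ m) (h : m * q + r = s + r') :
    (q : ℤ) * ((d : ℤ) ^ m - 1) + (d : ℤ) ^ r < s * (d : ℤ) ^ m + (d : ℤ) ^ r' := by
  have hd1 : (1 : ℤ) < d := by exact_mod_cast hd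
  have hs1 : (1 : ℤ) ≤ s := by exact_mod_cast hs
  have hdm : (1 : ℤ) ≤ (d : ℤ) ^ m := one_le_pow₀ hd1.le
  have hdr' : (1 : ℤ) ≤ (d : ℤ) ^ r' := one_le_pow₀ hd1.le
  rcases lt_trichotomy q s with hq | rfl | hq
  · have hlt : (d : ℤ) ^ r < (d : ℤ) ^ m := pow_lt_pow_right₀ hd1 hr
    have hq1 : (q : ℤ) + 1 ≤ s := by exact_mod_cast hq
    nlinarith
  · have hrr : r ≤ r' := by nlinarith
    have hle : (d : ℤ) ^ r ≤ (d : ℤ) ^ r' := pow_le_pow_right₀ hd1.le hrr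
    nlinarith
  · have hm1 : m = 1 := by
      -- `m (s + 1) ≤ s + r' ≤ s + m` gives `m s ≤ s`.
      nlinarith
    subst hm1
    have hr0 : r = 0 := by omega
    have hr1 : r' = 1 := by omega
    have hq1 : q = s + 1 := by omega
    subst hr0 hr1 hq1
    push_cast
    nlinarith

/-- **Case (b):** for `d ≥ 2` and `2 ≤ k ≤ n - 1`, the maximal `k`-CES dimension is
strictly decreasing in `k` for fixed `d` and `n`: `D(d,k+1,n) < D(d,k,n)`. -/
theorem stmt_3 (d k n : ℕ) (hd : 2 ≤ d) (hk : 2 ≤ k) (hkn : k ≤ n - 1) :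
    Dmax d (k + 1) n < Dmax d k n := by
  obtain ⟨m, rfl⟩ : ∃ m, k = m + 1 := ⟨k - 1, by omega⟩
  have hm : 0 < m := by omega
  unfold Dmax
  simp only [Nat.add_sub_cancel]
  obtain ⟨s, hs⟩ : ∃ s, s = n / (m + 1) := ⟨_, rfl⟩
  obtain ⟨r', hr'⟩ : ∃ r', r' = n % (m + 1) := ⟨_, rfl⟩
  have hn : (m + 1) * s + r' = n := by rw [hs, hr']; exact Nat.div_add_mod n (m + 1)
  have hr'm : r' < m + 1 := hr' ▸ Nat.mod_lt n (Nat.succ_pos m)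
  have hs1 : 1 ≤ s := hs ▸ Nat.div_pos (by omega) (Nat.succ_pos m)
  have hsplit : n = (s + r') + m * s := by rw [← hn]; ring
  have hdiv : n / m = (s + r') / m + s := by rw [hsplit, Nat.add_mul_div_left _ _ hm]
  have hmod : n - m * (n / m) = (s + r') % m := by
    rw [← Nat.mod_def, hsplit, Nat.add_mul_mod_self_left]
  have hmod' : n - (m + 1) * s = r' := by omega
  have key := key_ineq d m s ((s + r') / m) ((s + r') % m) r' hd hm hs1 (Nat.mod_lt _ hm)
    (by omega) (Nat.div_add_mod _ _)
  rw [hmod, hdiv, ← hs, hmod', pow_succ]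
  generalize (s + r') / m = q at key ⊢
  generalize (s + r') % m = r at key ⊢
  have hd2 : (2 : ℤ) ≤ d := by exact_mod_cast hd
  have hpos : (0 : ℤ) ≤ s * (d : ℤ) ^ m := by positivity
  have hmul := mul_le_mul_of_nonneg_left hd2 hpos
  push_cast
  linarith
end

section
/- Let d, n, k be integers with d ≥ 2 and 2 ≤ k ≤ n, and define D(d,k,n) = d^n − (t·d^{k−1} + d^{n−(k−1)t} − t) where t = ⌊n/(k−1)⌋ (so that for the argument n+1 one uses t' = ⌊(n+1)/(k−1)⌋). Then D is strictly increasing in n for fixed d and k: D(d, k, n+1) > D(d, k, n). -/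
theorem Dmax_mul_add (d m q r : ℕ) (hr : r < m) :
    Dmax d (m + 1) (m * q + r) =
      (d : ℤ) ^ (m * q + r) - (q * (d : ℤ) ^ m + (d : ℤ) ^ r - q) := by
  have hdiv : (m * q + r) / m = q := by
    rw [Nat.mul_add_div (by omega), Nat.div_eq_of_lt hr, add_zero]
  simp only [Dmax, Nat.add_sub_cancel, hdiv, Nat.add_sub_cancel_left]

theorem Dmax_succ_sub (d m q r : ℕ) (hr : r < m) :
    Dmax d (m + 1) (m * q + r + 1) - Dmax d (m + 1) (m * q + r) =
      ((d : ℤ) - 1) * ((d : ℤ) ^ (m * q + r) - (d : ℤ) ^ r) := by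
  rw [Dmax_mul_add d m q r hr]
  rcases Nat.lt_or_ge (r + 1) m with h | h
  · rw [add_assoc (m * q) r 1, Dmax_mul_add d m q (r + 1) h]
    ring
  · obtain rfl : m = r + 1 := by omega
    rw [show (r + 1) * q + r + 1 = (r + 1) * (q + 1) + 0 by ring,
      Dmax_mul_add d (r + 1) (q + 1) 0 (by omega)]
    push_cast
    ring

/-- **Case (c):** for `d ≥ 2` and `2 ≤ k ≤ n`, the maximal `k`-CES dimension is strictly
increasing in `n` for fixed `d` and `k`: `D(d,k,n+1) > D(d,k,n)`. -/
theorem stmt_4 (d k n : ℕ) (hd : 2 ≤ d) (hk : 2 ≤ k) (hkn : k ≤ n) :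
    Dmax d k n < Dmax d k (n + 1) := by
  obtain ⟨m, rfl⟩ : ∃ m, k = m + 1 := ⟨k - 1, by omega⟩
  have hr : n % m < m := Nat.mod_lt n (by omega)
  have hdiff := Dmax_succ_sub d m (n / m) (n % m) hr
  rw [Nat.div_add_mod] at hdiff
  have hd' : (1 : ℤ) < d := by exact_mod_cast hd
  have hpow : (d : ℤ) ^ (n % m) < (d : ℤ) ^ n := pow_lt_pow_right₀ hd' (by omega)
  have hpos := mul_pos (sub_pos.2 hd') (sub_pos.2 hpow)
  rw [← hdiff] at hpos
  exact sub_pos.1 hpos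
end

section
/- Let n and w be integers with n ≥ 2 and 1 ≤ w ≤ n−1, and for integers m ≥ 1 define f_w(m) = (n−w)·⌊(m−1)/n⌋ + max(m − w − n·⌊(m−1)/n⌋, 1). Then for every integer r ≥ 1, the largest integer m with f_w(m) = r is m* = r + w + w·⌊(r−1)/(n−w)⌋; that is, f_w(m*) = r and every m ≥ 1 with f_w(m) = r satisfies m ≤ m*. -/
/-!
Write `d = n - w`. If `m - 1 = n q + t` with `0 ≤ t < n`, then `f m - 1 = d q + max (t - w) 0`, and
`0 ≤ max (t - w) 0 < d`, so this is the Euclidean division of `f m - 1` by `d`: the block index `q`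
of `m` is recovered from `r = f m` as `(r - 1) / d`. Within a block, `t ≤ max (t - w) 0 + w`, which
is the bound `m ≤ m*`. Equality is attained: if `r - 1 = d k + s` with `0 ≤ s < d`, then
`m* - 1 = n k + (s + w)` with `0 ≤ s + w < n`.
-/

/-- For integers `n ≥ 2`, `1 ≤ w ≤ n−1` and
`f_w(m) = (n−w)⌊(m−1)/n⌋ + max(m − w − n⌊(m−1)/n⌋, 1)` (for `m ≥ 1`): for every integer
`r ≥ 1` the largest integer `m` with `f_w(m) = r` is `m* = r + w + w⌊(r−1)/(n−w)⌋`, i.e.,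
`f_w(m*) = r` and every `m ≥ 1` with `f_w(m) = r` satisfies `m ≤ m*`. -/
theorem stmt_10 (n w : ℤ) (hn : 2 ≤ n) (hw1 : 1 ≤ w) (hw2 : w ≤ n - 1)
    (f : ℤ → ℤ)
    (hf : ∀ m, f m = (n - w) * ((m - 1) / n) + max (m - w - n * ((m - 1) / n)) 1) :
    ∀ r : ℤ, 1 ≤ r →
      f (r + w + w * ((r - 1) / (n - w))) = r ∧
      ∀ m : ℤ, 1 ≤ m → f m = r → m ≤ r + w + w * ((r - 1) / (n - w)) := by
  intro r hr
  have hd : 0 < n - w := by omega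
  have hn0 : 0 < n := by omega
  constructor
  · have hs0 := Int.emod_nonneg (r - 1) hd.ne'
    have hs1 := Int.emod_lt_of_pos (r - 1) hd
    have hrs := Int.emod_add_mul_ediv (r - 1) (n - w)
    generalize (r - 1) / (n - w) = k at *
    generalize (r - 1) % (n - w) = s at *
    have hq : (r + w + w * k - 1) / n = k := by
      rw [Int.ediv_eq_iff_of_pos hn0]
      constructor <;> nlinarith
    rw [hf, hq, max_eq_left (by nlinarith)]
    ring
  · intro m _ hm
    rw [hf] at hm
    have ht0 := Int.emod_nonneg (m - 1) hn0.ne'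
    have ht1 := Int.emod_lt_of_pos (m - 1) hn0
    have hmt := Int.emod_add_mul_ediv (m - 1) n
    generalize (m - 1) / n = q at *
    generalize (m - 1) % n = t at *
    have h1 := le_max_left (m - w - n * q) 1
    have h2 := le_max_right (m - w - n * q) 1
    have h3 : max (m - w - n * q) 1 ≤ n - w := max_le (by linarith) (by omega)
    have hq : (r - 1) / (n - w) = q := by
      rw [Int.ediv_eq_iff_of_pos hd]
      constructor <;> nlinarith
    rw [hq]
    nlinarith
end

section
/- Let d, n, k be integers with d ≥ 2 and 2 ≤ k ≤ n, set w = n−k+1, and for integers m ≥ 1 let s(m) = w·⌊(m−1)/n⌋ + min(w, m − 1 − n·⌊(m−1)/n⌋). If a positive integer m satisfies m − s(m) ≤ d^{k−1} − 1, then m ≤ d^{k−1} + n − k + (n−k+1)·⌊(d^{k−1}−2)/(k−1)⌋. Equivalently, every integer m ≥ d^{k−1} + (n−k+1)·(⌊(d^{k−1}−2)/(k−1)⌋ + 1) satisfies m − s(m) ≥ d^{k−1}. -/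
/-!
Write `w = n - k + 1`, `j = k - 1`, so `n = w + j`, and divide with remainder: `m - 1 = n q + r`.
Then `m - s(m) = 1 + j q + max (r - w) 0`. If this is at most `D - 1`, where `D = d ^ (k - 1)`, then
`j q ≤ D - 2`, hence `q ≤ ⌊(D - 2) / j⌋`; and also `j q + r - w ≤ D - 2`. Adding `w` times the first
bound to the second bounds `m - 1 = (w + j) q + r`. This holds
for all integers `D` and `m`, and the second half of the theorem is its contrapositive.
-/

/-- The bound on `m` for arbitrary integers `D` and `m`. -/
lemma le_of_sub_le (D n k m : ℤ) (hk : 2 ≤ k) (hkn : k ≤ n)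
    (h : m - ((n - k + 1) * ((m - 1) / n) + min (n - k + 1) (m - 1 - n * ((m - 1) / n))) ≤ D - 1) :
    m ≤ D + n - k + (n - k + 1) * ((D - 2) / (k - 1)) := by
  have hr : 0 ≤ m - 1 - n * ((m - 1) / n) := by
    have := Int.mul_ediv_self_le (x := m - 1) (k := n) (by omega)
    omega
  generalize (m - 1) / n = q at *
  have h1 := min_le_left (n - k + 1) (m - 1 - n * q)
  have h2 := min_le_right (n - k + 1) (m - 1 - n * q)
  have hq : q ≤ (D - 2) / (k - 1) := by
    apply Int.le_ediv_of_mul_le (by omega)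
    linarith
  have hw := mul_le_mul_of_nonneg_left hq (show 0 ≤ n - k + 1 by omega)
  linarith

/-- **Arithmetic core of Proposition 2.** Let `d ≥ 2`, `2 ≤ k ≤ n`, `w = n − k + 1`, and
for `m ≥ 1` let `s(m) = w⌊(m−1)/n⌋ + min(w, m − 1 − n⌊(m−1)/n⌋)`. If a positive integer
`m` satisfies `m − s(m) ≤ d^{k−1} − 1`, then
`m ≤ d^{k−1} + n − k + (n−k+1)⌊(d^{k−1}−2)/(k−1)⌋`. Equivalently, every
`m ≥ d^{k−1} + (n−k+1)(⌊(d^{k−1}−2)/(k−1)⌋ + 1)` satisfies `m − s(m) ≥ d^{k−1}`. -/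
theorem stmt_12 (d n k : ℕ) (hd : 2 ≤ d) (hk : 2 ≤ k) (hkn : k ≤ n) :
    (∀ m : ℤ, 1 ≤ m →
      m - (((n : ℤ) - k + 1) * ((m - 1) / n)
            + min ((n : ℤ) - k + 1) (m - 1 - n * ((m - 1) / n)))
        ≤ (d : ℤ) ^ (k - 1) - 1 →
      m ≤ (d : ℤ) ^ (k - 1) + n - k
            + ((n : ℤ) - k + 1) * (((d : ℤ) ^ (k - 1) - 2) / ((k : ℤ) - 1))) ∧
    (∀ m : ℤ,
      (d : ℤ) ^ (k - 1)
          + ((n : ℤ) - k + 1) * ((((d : ℤ) ^ (k - 1) - 2) / ((k : ℤ) - 1)) + 1) ≤ m →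
      (d : ℤ) ^ (k - 1) ≤
        m - (((n : ℤ) - k + 1) * ((m - 1) / n)
            + min ((n : ℤ) - k + 1) (m - 1 - n * ((m - 1) / n)))) := by
  have hk' : (2 : ℤ) ≤ k := by exact_mod_cast hk
  have hkn' : (k : ℤ) ≤ n := by exact_mod_cast hkn
  refine ⟨fun m _ h => le_of_sub_le _ _ _ _ hk' hkn' h, fun m hm => ?_⟩
  by_contra! hlt
  have := le_of_sub_le ((d : ℤ) ^ (k - 1)) n k m hk' hkn' (by omega)
  linarith
end

section
/- Generalized pigeonhole principle: let p ≥ 0, q ≥ 1, r ≥ 0 be integers and let f : {1, …, q} → ℕ be an assignment of objects to q boxes with Σ_{i=1}^q f(i) = p·q + r. Then for each integer s with 0 ≤ s ≤ q there exists a subset S ⊆ {1, …, q} of size s such that Σ_{i∈S} f(i) ≥ p·s + min(r, s). -/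
/-!
Start from all `q` boxes and repeatedly discard a box with the fewest objects. If discarding the
smallest box, of size `m`, ever broke the bound, then `m ≥ p + 1`, so each of the `s` boxes that
remain holds at least `p + 1` objects; together they hold at least `p * s + s` objects, which is
enough after all.
-/

/-- One discarding step, passing from `s + 1` boxes to `s` boxes. -/
lemma exists_subset_card_of_succ (p r s : ℕ) (f : ℕ → ℕ) (T : Finset ℕ) (hT : T.card = s + 1)
    (h : p * (s + 1) + min r (s + 1) ≤ ∑ i ∈ T, f i) :
    ∃ S ⊆ T, S.card = s ∧ p * s + min r s ≤ ∑ i ∈ S, f i := by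
  obtain ⟨m, hm, hmin⟩ := T.exists_min_image f (Finset.card_pos.mp (by omega))
  have hcard : (T.erase m).card = s := by rw [Finset.card_erase_of_mem hm, hT]; rfl
  refine ⟨T.erase m, T.erase_subset m, hcard, ?_⟩
  have hadd := Finset.add_sum_erase T f hm
  have hlow : s * f m ≤ ∑ i ∈ T.erase m, f i := by
    have := Finset.card_nsmul_le_sum (T.erase m) f (f m)
      fun i hi => hmin i (Finset.mem_of_mem_erase hi)
    rwa [hcard, smul_eq_mul] at this
  rw [mul_add, mul_one] at h
  rcases le_or_gt (f m) p with hp | hp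
  · omega
  · have : s * (p + 1) ≤ s * f m := Nat.mul_le_mul_left s hp
    rw [mul_add, mul_one, mul_comm s p] at this
    omega

/-- **Generalized pigeonhole principle.** Let `p ≥ 0`, `q ≥ 1`, `r ≥ 0` be integers and
let `f` assign objects to `q` boxes (indexed by `Finset.range q`) with total number of
objects `∑ f i = p·q + r`. Then for each `0 ≤ s ≤ q` there exist `s` boxes containing in
total at least `p·s + min(r, s)` objects. -/
theorem stmt_13 (p q r : ℕ) (hq : 1 ≤ q) (f : ℕ → ℕ)
    (hsum : ∑ i ∈ Finset.range q, f i = p * q + r) :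
    ∀ s : ℕ, s ≤ q →
      ∃ S : Finset ℕ, S ⊆ Finset.range q ∧ S.card = s ∧
        p * s + min r s ≤ ∑ i ∈ S, f i := by
  intro s hs
  induction hs using Nat.decreasingInduction with
  | self =>
    exact ⟨Finset.range q, subset_rfl, Finset.card_range q, by omega⟩
  | of_succ s hs ih =>
    obtain ⟨T, hTq, hT, hTsum⟩ := ih
    obtain ⟨S, hST, hS, hSsum⟩ := exists_subset_card_of_succ p r s f T hT hTsum
    exact ⟨S, hST.trans hTq, hS, hSsum⟩
end

section
/- Let d, n, k be integers with d ≥ 2 and 2 ≤ k ≤ n, and set t = ⌊n/(k−1)⌋. Then d^{k−1} + (n−k+1)·(⌊(d^{k−1}−2)/(k−1)⌋ + 1) ≥ t·(d^{k−1} − 1) + d^{n−(k−1)t}. -/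
/-!
Write `m = k - 1`, `n = m t + r` with `r < m`, `D = d ^ m` and `F = ⌊(D - 2) / m⌋ + 1`, which is
the ceiling of `(D - 1) / m`; so `D - 1 ≤ m F`. The right-hand side is
`D + (t - 1) m F + r F ≥ 1 + t (D - 1) + r F`, and it remains to see `d ^ r - 1 ≤ r F`. As
`m r F ≥ r (D - 1)`, this follows from `m (d ^ r - 1) ≤ r (d ^ m - 1)`, i.e. from the convexity of
`x ↦ d ^ x` (its chord slopes from `0` are increasing), which is `mul_pow_sub_one_le`.
-/

/-- The slopes `(d ^ r - 1) / r` of the chords of `x ↦ d ^ x` from `0` increase with `r`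
(cross-multiplied form). -/
theorem mul_pow_sub_one_le (d : ℤ) (hd : 2 ≤ d) (r m : ℕ) (hrm : r ≤ m) :
    (m : ℤ) * (d ^ r - 1) ≤ r * (d ^ m - 1) := by
  induction m, hrm using Nat.le_induction with
  | base => exact le_rfl
  | succ m hrm ih =>
    rcases Nat.eq_zero_or_pos r with rfl | hr
    · simp
    · have hr' : (1 : ℤ) ≤ r := by exact_mod_cast hr
      have hpow : d ^ r ≤ d ^ m := pow_le_pow_right₀ (by linarith) hrm
      have hpos : 0 < d ^ m := by positivity
      have hcoef : (1 : ℤ) ≤ r * (d - 1) := by nlinarith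
      have hstep : d ^ m ≤ r * (d - 1) * d ^ m := le_mul_of_one_le_left hpos.le hcoef
      push_cast
      rw [pow_succ]
      linarith

/-- For `d ≥ 2`, `2 ≤ k ≤ n` and `t = ⌊n/(k−1)⌋`, the pigeonhole lower bound on the
cardinality of a `(k−1)`-unextendible product basis dominates the trivial one:
`d^{k−1} + (n−k+1)(⌊(d^{k−1}−2)/(k−1)⌋ + 1) ≥ t(d^{k−1} − 1) + d^{n−(k−1)t}`. -/
theorem stmt_14 (d n k : ℕ) (hd : 2 ≤ d) (hk : 2 ≤ k) (hkn : k ≤ n) :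
    ((n / (k - 1) : ℕ) : ℤ) * ((d : ℤ) ^ (k - 1) - 1)
        + (d : ℤ) ^ (n - (k - 1) * (n / (k - 1)))
      ≤ (d : ℤ) ^ (k - 1)
        + ((n : ℤ) - k + 1) * ((((d : ℤ) ^ (k - 1) - 2) / ((k : ℤ) - 1)) + 1) := by
  obtain ⟨m, rfl⟩ : ∃ m, k = m + 1 := ⟨k - 1, by omega⟩
  have hm : 0 < m := by omega
  simp only [Nat.add_sub_cancel]
  have hdiv : m * (n / m) + n % m = n := Nat.div_add_mod n m
  have hr : n % m < m := Nat.mod_lt _ hm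
  have ht : 1 ≤ n / m := (Nat.one_le_div_iff hm).2 (by omega)
  have hsub : n - m * (n / m) = n % m := by omega
  rw [hsub]
  generalize n / m = t at *
  generalize n % m = r at *
  have hd' : (2 : ℤ) ≤ d := by exact_mod_cast hd
  have hconv := mul_pow_sub_one_le d hd' r m hr.le
  have hm' : (0 : ℤ) < m := by exact_mod_cast hm
  have ht' : (1 : ℤ) ≤ t := by exact_mod_cast ht
  have hr0 : (0 : ℤ) ≤ r := by positivity
  have hn : (n : ℤ) = m * t + r := by exact_mod_cast hdiv.symm
  have hk1 : ((m + 1 : ℕ) : ℤ) - 1 = m := by push_cast; ring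
  have hk2 : (n : ℤ) - (m + 1 : ℕ) + 1 = m * (t - 1) + r := by rw [hn]; push_cast; ring
  rw [hk1, hk2]
  have hF := Int.lt_mul_ediv_self_add (x := (d : ℤ) ^ m - 2) hm'
  generalize ((d : ℤ) ^ m - 2) / m = q at *
  have hceil : (d : ℤ) ^ m - 1 ≤ m * (q + 1) := by linarith
  have hrem : (d : ℤ) ^ r - 1 ≤ r * (q + 1) := by
    refine le_of_mul_le_mul_left ?_ hm'
    calc (m : ℤ) * ((d : ℤ) ^ r - 1) ≤ r * ((d : ℤ) ^ m - 1) := hconv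
      _ ≤ r * (m * (q + 1)) := mul_le_mul_of_nonneg_left hceil hr0
      _ = m * (r * (q + 1)) := by ring
  have hblocks := mul_le_mul_of_nonneg_left hceil (sub_nonneg.2 ht')
  linarith
end

section
/- Let d, n, k be integers with d ≥ 2 and 2 ≤ k ≤ n, and set t = ⌊n/(k−1)⌋. If (k−1) does not divide d^{k−1} − 1 or (k−1) does not divide n, then the inequality is strict: d^{k−1} + (n−k+1)·(⌊(d^{k−1}−2)/(k−1)⌋ + 1) > t·(d^{k−1} − 1) + d^{n−(k−1)t}. -/
/-!
Put `m = k - 1`, `n = m t + r` with `0 ≤ r < m`, `D = d ^ m` and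
`c = ⌊(D - 2) / m⌋ + 1 = ⌈(D - 1) / m⌉`. The right side minus the left side is
`(t - 1) (m c - (D - 1)) + (r c - (d ^ r - 1))`, where `m c ≥ D - 1`.

If `r = 0`, then `m ∣ n`, so `m ∤ D - 1` and `m c > D - 1`; moreover `t ≥ 2` because `n > m`.
If `r > 0`, the strict growth of `j ↦ (d ^ j - 1) / j` (`mul_pow_sub_one_lt`) gives
`r c ≥ r (D - 1) / m > d ^ r - 1`.
-/

/-- The map `j ↦ (d ^ j - 1) / j` is strictly increasing on positive integers,
with denominators cleared. -/
lemma mul_pow_sub_one_lt (d : ℤ) (hd : 2 ≤ d) (r m : ℕ) (hr : 1 ≤ r) (hrm : r < m) :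
    (m : ℤ) * (d ^ r - 1) < r * (d ^ m - 1) := by
  have step : ∀ j : ℕ, r ≤ j → d ^ r - 1 < r * (d ^ (j + 1) - d ^ j) := by
    intro j hj
    have h1 : d ^ r ≤ d ^ j := pow_le_pow_right₀ (by linarith) hj
    have h2 : 0 < d ^ j := by positivity
    have h3 : d ^ j ≤ d ^ (j + 1) - d ^ j := by rw [pow_succ]; nlinarith
    have h4 : (1 : ℤ) ≤ r := by exact_mod_cast hr
    nlinarith
  induction m, hrm using Nat.le_induction with
  | base => have := step r le_rfl; rw [Nat.succ_eq_add_one]; push_cast; linarith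
  | succ j hj ih => have := step j (by omega); push_cast; linarith

theorem stmt_15 (d n k : ℕ) (hd : 2 ≤ d) (hk : 2 ≤ k) (hkn : k ≤ n)
    (hdvd : ¬ (k - 1) ∣ (d ^ (k - 1) - 1) ∨ ¬ (k - 1) ∣ n) :
    ((n / (k - 1) : ℕ) : ℤ) * ((d : ℤ) ^ (k - 1) - 1)
        + (d : ℤ) ^ (n - (k - 1) * (n / (k - 1)))
      < (d : ℤ) ^ (k - 1)
        + ((n : ℤ) - k + 1) * ((((d : ℤ) ^ (k - 1) - 2) / ((k : ℤ) - 1)) + 1) := by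
  obtain ⟨m, rfl⟩ : ∃ m, k = m + 1 := ⟨k - 1, by omega⟩
  have hm : 1 ≤ m := by omega
  simp only [Nat.add_sub_cancel] at *
  have hn := Nat.div_add_mod n m
  have hrm : n % m < m := Nat.mod_lt _ hm
  have ht : 1 ≤ n / m := Nat.div_pos (by omega) hm
  have hdn : m ∣ n ↔ n % m = 0 := Nat.dvd_iff_mod_eq_zero
  generalize n / m = t at *
  generalize n % m = r at *
  have hsub : n - m * t = r := by omega
  rw [hsub]
  have hnz : (n : ℤ) = m * t + r := by exact_mod_cast hn.symm
  have hmz : (1 : ℤ) ≤ m := by exact_mod_cast hm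
  have htz : (1 : ℤ) ≤ t := by exact_mod_cast ht
  have hdz : (2 : ℤ) ≤ d := by exact_mod_cast hd
  have hcast : ((m + 1 : ℕ) : ℤ) - 1 = m := by push_cast; ring
  rw [hcast]
  have hc : (d : ℤ) ^ m - 1 ≤ m * (((d : ℤ) ^ m - 2) / m + 1) := by
    have h1 := Int.emod_add_mul_ediv ((d : ℤ) ^ m - 2) m
    have h2 := Int.emod_lt_of_pos ((d : ℤ) ^ m - 2) (show (0 : ℤ) < m by linarith)
    linarith
  generalize ((d : ℤ) ^ m - 2) / m + 1 = c at *
  push_cast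
  rw [hnz]
  rcases Nat.eq_zero_or_pos r with rfl | hr
  · have hnd : ¬ m ∣ d ^ m - 1 := by
      rcases hdvd with h | h
      · exact h
      · exact absurd (hdn.2 rfl) h
    have hne : (d : ℤ) ^ m - 1 ≠ m * c := by
      intro h
      apply hnd
      have : (m : ℤ) ∣ ((d ^ m - 1 : ℕ) : ℤ) := by
        rw [Nat.cast_sub (Nat.one_le_pow _ _ (by omega))]
        push_cast
        exact ⟨c, h⟩
      exact_mod_cast this
    have hlt : (d : ℤ) ^ m - 1 < m * c := lt_of_le_of_ne hc hne
    have ht2 : (2 : ℤ) ≤ t := by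
      have : t ≠ 1 := by rintro rfl; omega
      omega
    push_cast
    rw [pow_zero]
    nlinarith
  · have hg := mul_pow_sub_one_lt d hdz r m hr hrm
    have hrc : (d : ℤ) ^ r - 1 < r * c := by
      have h1 : (r : ℤ) * ((d : ℤ) ^ m - 1) ≤ r * (m * c) :=
        mul_le_mul_of_nonneg_left hc (by positivity)
      have h2 : (m : ℤ) * ((d : ℤ) ^ r - 1) < m * (r * c) := by linarith
      exact lt_of_mul_lt_mul_left h2 (by linarith)
    nlinarith [mul_nonneg (sub_nonneg.2 htz) (sub_nonneg.2 hc)]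
end
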